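/- Let (X_t) be a Markov process on a Polish space 𝒳 with invariant probability measure μ_⋆, and let G : 𝒳 → [1,∞) be measurable. Suppose f : [1,∞) → [0,1] is such that y ↦ y·f(y) is strictly increasing to infinity and μ_⋆(G ≥ y) ≥ f(y) for every y ≥ 1, and g : 𝒳 × ℝ₊ → [1,∞) is increasing in its second argument with E[G(X_t) | X_0 = x_0] ≤ g(x_0, t). Then for every t ≥ 0, ‖μ_t − μ_⋆‖_TV ≥ (1/2) f((Id·f)^{-1}(2 g(x_0, t))), where μ_t is the law of X_t with X_0 = x_0 and (Id·f)^{-1} is the inverse of y ↦ y f(y). -/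

import Mathlib

open MeasureTheory

/-- Total variation distance between two measures. -/
noncomputable def tvDist {X : Type*} [MeasurableSpace X]
    (μ ν : Measure X) : ℝ :=
  ⨆ A : Set X, |(μ A).toReal - (ν A).toReal|

/-!
The superlevel set `{y ≤ G}` separates the two laws: it has `μs`-mass at least `f y`, whereas
Markov's inequality bounds its mass under `μ t` by `g x₀ t / y`. The level `y` solving
`y * f y = 2 * g x₀ t` is the one at which the Markov bound equals half of `f y`.
-/

section TotalVariation

variable {X : Type*} [MeasurableSpace X]

theorem bddAbove_range_abs_measureReal_sub (μ ν : Measure X) [IsFiniteMeasure μ]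
    [IsFiniteMeasure ν] : BddAbove (Set.range fun A : Set X => |μ.real A - ν.real A|) := by
  refine ⟨max (μ.real Set.univ) (ν.real Set.univ), ?_⟩
  rintro _ ⟨A, rfl⟩
  exact abs_sub_le_of_nonneg_of_le
    measureReal_nonneg (le_max_of_le_left (measureReal_mono A.subset_univ))
    measureReal_nonneg (le_max_of_le_right (measureReal_mono A.subset_univ))

theorem abs_measureReal_sub_le_tvDist (μ ν : Measure X) [IsFiniteMeasure μ] [IsFiniteMeasure ν]
    (A : Set X) : |μ.real A - ν.real A| ≤ tvDist μ ν :=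
  le_ciSup (bddAbove_range_abs_measureReal_sub μ ν) A

variable {μ ν : Measure X} [IsFiniteMeasure μ] [IsFiniteMeasure ν]

theorem measureReal_ge_sub_integral_div_le_tvDist {G : X → ℝ} (hG : 0 ≤ᵐ[μ] G)
    (hGint : Integrable G μ) {y : ℝ} (hy : 0 < y) :
    ν.real {x | y ≤ G x} - (∫ x, G x ∂μ) / y ≤ tvDist μ ν := by
  have markov : μ.real {x | y ≤ G x} ≤ (∫ x, G x ∂μ) / y :=
    (le_div_iff₀' hy).2 (mul_meas_ge_le_integral_of_nonneg hG hGint y)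
  calc ν.real {x | y ≤ G x} - (∫ x, G x ∂μ) / y
      ≤ ν.real {x | y ≤ G x} - μ.real {x | y ≤ G x} := sub_le_sub_left markov _
    _ ≤ |μ.real {x | y ≤ G x} - ν.real {x | y ≤ G x}| := abs_sub_comm (μ.real _) _ ▸ le_abs_self _
    _ ≤ tvDist μ ν := abs_measureReal_sub_le_tvDist μ ν _

theorem tv_lower_bound_convergence_general {G : X → ℝ} (hG : 0 ≤ᵐ[μ] G)
    (hGint : Integrable G μ) {m y p : ℝ} (hmoment : ∫ x, G x ∂μ ≤ m)
    (hp_tail : p ≤ ν.real {x | y ≤ G x}) (hy : 0 < y) (hlevel : 2 * m ≤ y * p) :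
    (1 / 2) * p ≤ tvDist μ ν := by
  have half_tail : (∫ x, G x ∂μ) / y ≤ (1 / 2) * p := (div_le_iff₀' hy).2 (by linarith)
  calc (1 / 2) * p = p - (1 / 2) * p := by ring
    _ ≤ ν.real {x | y ≤ G x} - (∫ x, G x ∂μ) / y := sub_le_sub hp_tail half_tail
    _ ≤ tvDist μ ν := measureReal_ge_sub_integral_div_le_tvDist hG hGint hy

end TotalVariation

/-- lower bound on the speed of convergence toward the invariant
measure.  Here `μ t` is the law of the Markov process at time `t` started from
`x₀` and `μs` is the invariant measure; the Markov property itself is not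
needed, only the tail lower bound for `μs` and the moment upper bound for
`μ t`. -/
theorem tv_lower_bound_convergence {X : Type*} [MeasurableSpace X]
    (x₀ : X) (μ : ℝ → Measure X) (μs : Measure X)
    [∀ t, IsProbabilityMeasure (μ t)] [IsProbabilityMeasure μs]
    (G : X → ℝ) (hGmeas : Measurable G) (hG1 : ∀ x, 1 ≤ G x)
    (hGint : ∀ t, 0 ≤ t → Integrable G (μ t))
    (f : ℝ → ℝ) (hf01 : ∀ y, 1 ≤ y → f y ∈ Set.Icc (0:ℝ) 1)
    (hfmono : StrictMonoOn (fun y => y * f y) (Set.Ici 1))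
    (hftop : Filter.Tendsto (fun y => y * f y) Filter.atTop Filter.atTop)
    (hf_tail : ∀ y, 1 ≤ y → f y ≤ (μs {x | y ≤ G x}).toReal)
    (g : X → ℝ → ℝ) (hg1 : ∀ x t, 0 ≤ t → 1 ≤ g x t)
    (hgmono : ∀ x, MonotoneOn (g x) (Set.Ici 0))
    (hmoment : ∀ t, 0 ≤ t → ∫ x, G x ∂(μ t) ≤ g x₀ t)
    (inv : ℝ → ℝ)
    (hinv : ∀ z, 1 ≤ z → 1 ≤ inv z ∧ inv z * f (inv z) = z) :
    ∀ t, 0 ≤ t → (1/2) * f (inv (2 * g x₀ t)) ≤ tvDist (μ t) μs := by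
  intro t ht
  obtain ⟨hy, hyf⟩ := hinv (2 * g x₀ t) (by linarith [hg1 x₀ t ht])
  exact tv_lower_bound_convergence_general (.of_forall fun x => zero_le_one.trans (hG1 x))
    (hGint t ht) (hmoment t ht) (hf_tail _ hy) (zero_lt_one.trans_le hy) hyf.ge
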